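/- Let k ≥ 4 and let z₁, ..., z_k be pairwise distinct points of the unit circle S¹. Then the tuple (z₁, ..., z_k) is cyclically oriented if and only if (z₁, z₂, z₃) is cyclically oriented and the cross ratios [z₂:z₃:z₁:z_j] for j = 4, ..., k are real numbers satisfying 0 < [z₂:z₃:z₁:z₄] < [z₂:z₃:z₁:z₅] < ⋯ < [z₂:z₃:z₁:z_k] < 1. -/

import Mathlib

open Complex

/-- The cross ratio `[z₁:z₂:z₃:z₄] = (z₁-z₃)(z₂-z₄)/((z₂-z₃)(z₁-z₄))`. -/
noncomputable def crossRatio (z₁ z₂ z₃ z₄ : ℂ) : ℂ :=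
  ((z₁ - z₃) * (z₂ - z₄)) / ((z₂ - z₃) * (z₁ - z₄))

/-- A tuple `(z₁, …, z_k)` of points of `S¹` is *cyclically oriented* if it can be written as
`z_j = e^{iθ_j}` with `θ₁ < θ₂ < ⋯ < θ_k < θ₁ + 2π`. -/
def CyclicallyOriented {k : ℕ} (z : Fin k → ℂ) : Prop :=
  ∃ θ : Fin k → ℝ, StrictMono θ ∧ (∀ i j : Fin k, θ j < θ i + 2 * Real.pi) ∧
    ∀ j, z j = Complex.exp (θ j * Complex.I)

/-!
Fix `c < a < b < c + 2π`. Factoring `e^{ix} - e^{iy} = 2i e^{i(x+y)/2} sin((x-y)/2)` shows that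
the cross ratio of `e^{ia}, e^{ib}, e^{ic}, e^{it}` is the real number
`sin((a-c)/2) sin((t-b)/2) / (sin((b-c)/2) sin((t-a)/2))`, and as a function of `t` it is a strictly
increasing bijection from `(b, c + 2π)` onto `(0, 1)`. Hence increasing angles past `b` give
increasing cross ratios. Conversely, real numbers `λ_j` increasing in `(0, 1)` come from increasing
angles `t_j`, and since a cross ratio determines its last entry, `z_j = e^{it_j}`.
-/

theorem crossRatio_injOn {z₁ z₂ z₃ : ℂ} (h₁₂ : z₁ ≠ z₂) (h₁₃ : z₁ ≠ z₃) (h₂₃ : z₂ ≠ z₃) :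
    Set.InjOn (crossRatio z₁ z₂ z₃) {z₁}ᶜ := by
  intro w hw w' hw' h
  have hw₁ : z₁ - w ≠ 0 := sub_ne_zero.mpr (Ne.symm hw)
  have hw'₁ : z₁ - w' ≠ 0 := sub_ne_zero.mpr (Ne.symm hw')
  have h₁₂' : z₁ - z₂ ≠ 0 := sub_ne_zero.mpr h₁₂
  have h₁₃' : z₁ - z₃ ≠ 0 := sub_ne_zero.mpr h₁₃
  have h₂₃' : z₂ - z₃ ≠ 0 := sub_ne_zero.mpr h₂₃
  have hprod : (z₁ - z₃) * (z₂ - z₃) * (z₁ - z₂) * (w - w') = 0 := by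
    rw [crossRatio, crossRatio,
      div_eq_div_iff (mul_ne_zero h₂₃' hw₁) (mul_ne_zero h₂₃' hw'₁)] at h
    linear_combination -h
  simpa [h₁₂', h₁₃', h₂₃', sub_eq_zero] using hprod

theorem exp_mul_I_sub_exp_mul_I (x y : ℂ) :
    exp (x * I) - exp (y * I) = 2 * I * exp ((x + y) / 2 * I) * sin ((x - y) / 2) := by
  have hx : exp (x * I) = exp ((x + y) / 2 * I) * exp ((x - y) / 2 * I) := by
    rw [← exp_add]; ring_nf
  have hy : exp (y * I) = exp ((x + y) / 2 * I) * exp (-((x - y) / 2) * I) := by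
    rw [← exp_add]; ring_nf
  rw [hx, hy, exp_mul_I ((x - y) / 2), exp_mul_I (-((x - y) / 2)), Complex.cos_neg,
    Complex.sin_neg]
  ring

theorem sin_half_sub_pos {x y : ℝ} (hxy : x < y) (hyx : y < x + 2 * Real.pi) :
    0 < Real.sin ((y - x) / 2) :=
  Real.sin_pos_of_pos_of_lt_pi (by linarith) (by linarith)

theorem exp_mul_I_ne_of_lt {x y : ℝ} (hxy : x < y) (hyx : y < x + 2 * Real.pi) :
    exp (x * I) ≠ exp (y * I) := by
  have hsin : sin (((y : ℂ) - x) / 2) ≠ 0 := by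
    exact_mod_cast (sin_half_sub_pos hxy hyx).ne'
  refine (sub_ne_zero.mp ?_).symm
  rw [exp_mul_I_sub_exp_mul_I]
  simp [exp_ne_zero, hsin]

theorem sin_mul_sin_sub_sin_mul_sin (a b s t : ℝ) :
    Real.sin (t - b) * Real.sin (s - a) - Real.sin (s - b) * Real.sin (t - a) =
      Real.sin (b - a) * Real.sin (t - s) := by
  simp only [Real.sin_sub]
  ring

/-- The cross ratio `[e^{ia} : e^{ib} : e^{ic} : e^{it}]` as a real function of the angles.
The signs are distributed so that all four sines are positive when `c < a < b < t < c + 2π`. -/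
noncomputable def angularCrossRatio (a b c t : ℝ) : ℝ :=
  (Real.sin ((a - c) / 2) * Real.sin ((t - b) / 2)) /
    (Real.sin ((b - c) / 2) * Real.sin ((t - a) / 2))

theorem crossRatio_exp_mul_I (a b c t : ℝ) :
    crossRatio (exp (a * I)) (exp (b * I)) (exp (c * I)) (exp (t * I)) =
      angularCrossRatio a b c t := by
  have hphase : exp ((a + c) / 2 * I) * exp ((b + t) / 2 * I) =
      exp ((b + c) / 2 * I) * exp ((a + t) / 2 * I) := by
    rw [← exp_add, ← exp_add]; ring_nf
  have hsin (x : ℂ) : sin ((x - t) / 2) = -sin ((t - x) / 2) := by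
    rw [← Complex.sin_neg]; ring_nf
  have hfactor : 4 * (exp ((b + c) / 2 * I) * exp ((a + t) / 2 * I)) ≠ 0 := by
    simp [exp_ne_zero]
  simp only [crossRatio, angularCrossRatio, exp_mul_I_sub_exp_mul_I, hsin]
  push_cast
  refine Eq.trans ?_ (mul_div_mul_left _ _ hfactor)
  congr 1
  · linear_combination 4 * sin ((a - c) / 2) * sin ((t - b) / 2) * (hphase -
      exp ((a + c) / 2 * I) * exp ((b + t) / 2 * I) * I_sq)
  · linear_combination -4 * exp ((b + c) / 2 * I) * exp ((a + t) / 2 * I) *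
      sin ((b - c) / 2) * sin ((t - a) / 2) * I_sq

section AngularCrossRatio

variable {a b c : ℝ}

theorem angularCrossRatio_strictMonoOn (hca : c < a) (hab : a < b) (hbc : b < c + 2 * Real.pi) :
    StrictMonoOn (angularCrossRatio a b c) (Set.Ioo a (a + 2 * Real.pi)) := by
  intro s hs t ht hst
  have hac_pos : 0 < Real.sin ((a - c) / 2) := sin_half_sub_pos hca (hab.trans hbc)
  have hbc_pos : 0 < Real.sin ((b - c) / 2) := sin_half_sub_pos (hca.trans hab) hbc
  have hba_pos : 0 < Real.sin ((b - a) / 2) := sin_half_sub_pos hab (by linarith)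
  have hsa_pos : 0 < Real.sin ((s - a) / 2) := sin_half_sub_pos hs.1 hs.2
  have hta_pos : 0 < Real.sin ((t - a) / 2) := sin_half_sub_pos ht.1 ht.2
  have hts_pos : 0 < Real.sin ((t - s) / 2) := sin_half_sub_pos hst (by linarith [hs.1, ht.2])
  have hcross : Real.sin ((s - b) / 2) * Real.sin ((t - a) / 2) <
      Real.sin ((t - b) / 2) * Real.sin ((s - a) / 2) := by
    have h := sin_mul_sin_sub_sin_mul_sin (a / 2) (b / 2) (s / 2) (t / 2)
    simp only [← sub_div] at h
    linarith [mul_pos hba_pos hts_pos]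
  simp only [angularCrossRatio, mul_div_mul_comm]
  exact mul_lt_mul_of_pos_left ((div_lt_div_iff₀ hsa_pos hta_pos).mpr hcross)
    (div_pos hac_pos hbc_pos)

theorem angularCrossRatio_continuousOn (a b c : ℝ) :
    ContinuousOn (angularCrossRatio a b c) (Set.Ioo a (a + 2 * Real.pi)) := by
  have hquot : ContinuousOn (fun t => Real.sin ((t - b) / 2) / Real.sin ((t - a) / 2))
      (Set.Ioo a (a + 2 * Real.pi)) :=
    ContinuousOn.div (by fun_prop) (by fun_prop) fun t ht => (sin_half_sub_pos ht.1 ht.2).ne'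
  refine (hquot.const_mul (Real.sin ((a - c) / 2) / Real.sin ((b - c) / 2))).congr fun t _ => ?_
  rw [angularCrossRatio, mul_div_mul_comm]

theorem angularCrossRatio_self_right (a b c : ℝ) : angularCrossRatio a b c b = 0 := by
  simp [angularCrossRatio]

theorem angularCrossRatio_add_two_pi (hca : c < a) (hab : a < b) (hbc : b < c + 2 * Real.pi) :
    angularCrossRatio a b c (c + 2 * Real.pi) = 1 := by
  have hac_pos : 0 < Real.sin ((a - c) / 2) := sin_half_sub_pos hca (hab.trans hbc)
  have hbc_pos : 0 < Real.sin ((b - c) / 2) := sin_half_sub_pos (hca.trans hab) hbc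
  have hsin (x : ℝ) : Real.sin ((c + 2 * Real.pi - x) / 2) = Real.sin ((x - c) / 2) := by
    rw [← Real.sin_pi_sub]; ring_nf
  rw [angularCrossRatio, hsin, hsin, mul_comm, div_self (mul_pos hbc_pos hac_pos).ne']

theorem angularCrossRatio_bijOn (hca : c < a) (hab : a < b) (hbc : b < c + 2 * Real.pi) :
    Set.BijOn (angularCrossRatio a b c) (Set.Ioo b (c + 2 * Real.pi)) (Set.Ioo 0 1) := by
  have hsub : Set.Icc b (c + 2 * Real.pi) ⊆ Set.Ioo a (a + 2 * Real.pi) :=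
    Set.Icc_subset_Ioo hab (by linarith)
  have hmono := (angularCrossRatio_strictMonoOn hca hab hbc).mono hsub
  have hcont := (angularCrossRatio_continuousOn a b c).mono hsub
  rw [← angularCrossRatio_self_right a b c, ← angularCrossRatio_add_two_pi hca hab hbc]
  exact ⟨hmono.mapsTo_Ioo, hmono.injOn.mono Set.Ioo_subset_Icc_self,
    intermediate_value_Ioo hbc.le hcont⟩

theorem exists_eq_exp_mul_I_of_crossRatio_eq (hca : c < a) (hab : a < b)
    (hbc : b < c + 2 * Real.pi) {w : ℂ} (hw : w ≠ exp (a * I)) {r : ℝ} (hr : r ∈ Set.Ioo 0 1)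
    (hwr : crossRatio (exp (a * I)) (exp (b * I)) (exp (c * I)) w = r) :
    ∃ t ∈ Set.Ioo b (c + 2 * Real.pi), angularCrossRatio a b c t = r ∧ w = exp (t * I) := by
  obtain ⟨t, ht, rfl⟩ := (angularCrossRatio_bijOn hca hab hbc).surjOn hr
  have hta : exp (t * I) ≠ exp (a * I) :=
    (exp_mul_I_ne_of_lt (hab.trans ht.1) (by linarith [ht.2])).symm
  have hinj := crossRatio_injOn (exp_mul_I_ne_of_lt hab (by linarith))
    (exp_mul_I_ne_of_lt hca (by linarith)).symm (exp_mul_I_ne_of_lt (hca.trans hab) hbc).symm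
  exact ⟨t, ht, rfl, hinj hw hta (hwr.trans (crossRatio_exp_mul_I a b c t).symm)⟩

end AngularCrossRatio

theorem CyclicallyOriented.comp {k m : ℕ} {z : Fin k → ℂ} (hz : CyclicallyOriented z)
    {f : Fin m → Fin k} (hf : StrictMono f) : CyclicallyOriented (z ∘ f) := by
  obtain ⟨θ, hθ, hspan, hexp⟩ := hz
  exact ⟨θ ∘ f, hθ.comp hf, fun i j => hspan (f i) (f j), fun j => hexp (f j)⟩

theorem cyclicallyOriented_of_strictMono {n : ℕ} {z : Fin (n + 1) → ℂ} {θ : Fin (n + 1) → ℝ}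
    (hθ : StrictMono θ) (hspan : ∀ j, θ j < θ 0 + 2 * Real.pi) (hexp : ∀ j, z j = exp (θ j * I)) :
    CyclicallyOriented z :=
  ⟨θ, hθ, fun i j => (hspan j).trans_le (by gcongr; exact hθ.monotone (Fin.zero_le i)), hexp⟩

section CrossRatioChain

variable {n : ℕ} {z : Fin (n + 3) → ℂ}

theorem CyclicallyOriented.first_three (hz : CyclicallyOriented z) :
    CyclicallyOriented ![z 0, z 1, z 2] := by
  have hcomp := hz.comp (Fin.strictMono_castLE (Nat.le_add_left 3 n))
  convert hcomp using 1
  ext i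
  fin_cases i <;> rfl

theorem CyclicallyOriented.exists_crossRatio_eq (hz : CyclicallyOriented z) :
    ∃ lam : Fin n → ℝ,
      (∀ j, crossRatio (z 1) (z 2) (z 0) (z (j.addNat 3)) = lam j) ∧
        (∀ j, 0 < lam j) ∧ StrictMono lam ∧ (∀ j, lam j < 1) := by
  obtain ⟨θ, hθ, hspan, hexp⟩ := hz
  have h01 : θ 0 < θ 1 := hθ (by simp)
  have h12 : θ 1 < θ 2 := hθ (by simp [Fin.lt_def, Nat.mod_eq_of_lt])
  have htail (j : Fin n) : θ (j.addNat 3) ∈ Set.Ioo (θ 2) (θ 0 + 2 * Real.pi) :=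
    ⟨hθ (by simp [Fin.lt_def, Nat.mod_eq_of_lt]), hspan _ _⟩
  have hmaps (j : Fin n) := (angularCrossRatio_bijOn h01 h12 (hspan 0 2)).mapsTo (htail j)
  have hmono := angularCrossRatio_strictMonoOn h01 h12 (hspan 0 2)
  have hsub (j : Fin n) : θ (j.addNat 3) ∈ Set.Ioo (θ 1) (θ 1 + 2 * Real.pi) :=
    ⟨h12.trans (htail j).1, hspan _ _⟩
  refine ⟨fun j => angularCrossRatio (θ 1) (θ 2) (θ 0) (θ (j.addNat 3)), fun j => ?_,
    fun j => (hmaps j).1, fun i j hij => hmono (hsub i) (hsub j) (hθ ?_), fun j => (hmaps j).2⟩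
  · simp only [hexp, crossRatio_exp_mul_I]
  · simpa using hij

theorem cyclicallyOriented_of_crossRatio_eq (hne : ∀ j : Fin n, z (j.addNat 3) ≠ z 1)
    (htriple : CyclicallyOriented ![z 0, z 1, z 2]) {lam : Fin n → ℝ}
    (hcross : ∀ j, crossRatio (z 1) (z 2) (z 0) (z (j.addNat 3)) = lam j)
    (hpos : ∀ j, 0 < lam j) (hlam : StrictMono lam) (hlt_one : ∀ j, lam j < 1) :
    CyclicallyOriented z := by
  obtain ⟨φ, hφ, hspan, hexp⟩ := htriple
  have h01 : φ 0 < φ 1 := hφ (by decide)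
  have h12 : φ 1 < φ 2 := hφ (by decide)
  have hz0 : z 0 = exp (φ 0 * I) := hexp 0
  have hz1 : z 1 = exp (φ 1 * I) := hexp 1
  have hz2 : z 2 = exp (φ 2 * I) := hexp 2
  simp only [hz0, hz1, hz2] at hne hcross
  choose t ht htlam hzt using fun j =>
    exists_eq_exp_mul_I_of_crossRatio_eq h01 h12 (hspan 0 2) (hne j) ⟨hpos j, hlt_one j⟩ (hcross j)
  have hsub (j : Fin n) : t j ∈ Set.Ioo (φ 1) (φ 1 + 2 * Real.pi) :=
    ⟨h12.trans (ht j).1, by linarith [(ht j).2]⟩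
  have ht_mono : StrictMono t := fun i j hij => by
    rw [← (angularCrossRatio_strictMonoOn h01 h12 (hspan 0 2)).lt_iff_lt (hsub i) (hsub j),
      htlam, htlam]
    exact hlam hij
  let θ : Fin (n + 3) → ℝ := Fin.cons (φ 0) (Fin.cons (φ 1) (Fin.cons (φ 2) t))
  refine cyclicallyOriented_of_strictMono (θ := θ) ?_ ?_ ?_
  · have hφ2t (j : Fin n) : φ 2 < t j := (ht j).1
    simp only [θ, Fin.strictMono_cons, Fin.forall_fin_succ, Fin.cons_zero, Fin.cons_succ]
    exact ⟨⟨h01, h01.trans h12, fun j => (h01.trans h12).trans (hφ2t j)⟩,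
      ⟨h12, fun j => h12.trans (hφ2t j)⟩, hφ2t, ht_mono⟩
  · simp only [θ, Fin.forall_fin_succ, Fin.cons_zero, Fin.cons_succ]
    exact ⟨hspan 0 0, hspan 0 1, hspan 0 2, fun j => (ht j).2⟩
  · simp only [θ, Fin.forall_fin_succ, Fin.cons_zero, Fin.cons_succ]
    exact ⟨hz0, hz1, hz2, hzt⟩

end CrossRatioChain

theorem cyclicallyOriented_iff_crossRatio_general {n : ℕ} (z : Fin (n + 3) → ℂ)
    (hne : ∀ j : Fin n, z (j.addNat 3) ≠ z 1) :
    CyclicallyOriented z ↔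
      CyclicallyOriented ![z 0, z 1, z 2] ∧
        ∃ lam : Fin n → ℝ,
          (∀ j, crossRatio (z 1) (z 2) (z 0) (z (j.addNat 3)) = lam j) ∧
            (∀ j, 0 < lam j) ∧ StrictMono lam ∧ (∀ j, lam j < 1) :=
  ⟨fun hz => ⟨hz.first_three, hz.exists_crossRatio_eq⟩,
    fun ⟨htriple, _, hcross, hpos, hlam, hlt_one⟩ =>
      cyclicallyOriented_of_crossRatio_eq hne htriple hcross hpos hlam hlt_one⟩

/-- **Characterization of cyclic orientation by cross ratios.** For `k ≥ 4` and pairwise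
distinct points `z₀, …, z_{k-1}` of the unit circle (0-indexed), the tuple is cyclically
oriented iff `(z₀, z₁, z₂)` is cyclically oriented and the cross ratios
`[z₁:z₂:z₀:z_{j+3}]` are real numbers forming a strictly increasing chain in `(0,1)`. -/
theorem cyclicallyOriented_iff_crossRatio (k : ℕ) (hk : 4 ≤ k) (z : Fin k → ℂ)
    (hcirc : ∀ j, ‖z j‖ = 1) (hinj : Function.Injective z) :
    CyclicallyOriented z ↔
      (CyclicallyOriented ![z ⟨0, by omega⟩, z ⟨1, by omega⟩, z ⟨2, by omega⟩] ∧
        ∃ lam : Fin (k - 3) → ℝ,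
          (∀ j : Fin (k - 3),
            crossRatio (z ⟨1, by omega⟩) (z ⟨2, by omega⟩) (z ⟨0, by omega⟩)
                (z ⟨(j : ℕ) + 3, by have := j.isLt; omega⟩) = (lam j : ℂ)) ∧
          (∀ j, 0 < lam j) ∧ StrictMono lam ∧ (∀ j, lam j < 1)) := by
  obtain ⟨n, rfl⟩ := Nat.exists_eq_add_of_le' (show 3 ≤ k by omega)
  exact cyclicallyOriented_iff_crossRatio_general z fun j => hinj.ne (by simp [Fin.ext_iff])
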